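/- Fix d ≥ 3 and K > 0, set η := K/√(log d), and let m̃^φ(w) := g^φ(max_{1≤j≤d} w_j) with the piecewise linear g^φ, and ρ̃(w) := E[m̃^φ(w + Z)] with Z ∼ N(0, I_d). Let Ψ(w) := ∫_{−∞}^0 ∏_j Φ₁(t − w_j) dt. Then for every integer v ≥ 1, sup_{w∈ℝ^d} Σ_{j_1,…,j_v=1}^d sup_{‖y‖_∞≤η} |∂_{j_1…j_v} ρ̃(w+y)| ≤ 2φ sup_{w∈ℝ^d} Σ_{j_1,…,j_v=1}^d sup_{‖y‖_∞≤η} |∂_{j_1…j_v} Ψ(w+y)|. -/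

import Mathlib

open MeasureTheory ProbabilityTheory

/-- The standard normal density. -/
noncomputable def phi1 (t : ℝ) : ℝ := Real.exp (-t ^ 2 / 2) / Real.sqrt (2 * Real.pi)

/-- The standard normal cdf. -/
noncomputable def Phi1 (t : ℝ) : ℝ := ∫ u in Set.Iic t, phi1 u

/-- Ψ(w) := ∫_{−∞}^0 ∏_j Φ₁(t − w_j) dt. -/
noncomputable def Psi (d : ℕ) (w : Fin d → ℝ) : ℝ :=
  ∫ t in Set.Iic (0 : ℝ), ∏ j, Phi1 (t - w j)

/-- The piecewise-linear smoothing function g^φ. -/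
noncomputable def gphi (φ t : ℝ) : ℝ :=
  if t ≤ 0 then 1 else if t < 1 / φ then 1 - φ * t else 0

/-- The smoothed indicator of the negative orthant, m̃^φ(w) = g^φ(max_j w_j). -/
noncomputable def morth (d : ℕ) (φ : ℝ) (w : Fin d → ℝ) : ℝ := gphi φ (⨆ j, w j)

/-- ρ̃(w) = E[m̃^φ(w + Z)], Z ∼ N(0, I_d) with law γ. -/
noncomputable def rhoTil (d : ℕ) (φ : ℝ) (γ : Measure (Fin d → ℝ))
    (w : Fin d → ℝ) : ℝ :=
  ∫ z, morth d φ (w + z) ∂γ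


open scoped ContDiff

noncomputable def qf (s : ℝ) : ℝ := (1 + s ^ 2)⁻¹

noncomputable def Qf {d : ℕ} (x : Fin d → ℝ) : ℝ := ∑ j, qf (x j)

lemma qf_pos (s : ℝ) : 0 < qf s := by unfold qf; positivity

lemma qf_shift (s s' : ℝ) (h : |s - s'| ≤ 1) : qf s' ≤ 3 * qf s := by
  unfold qf
  rw [← div_eq_mul_inv, ← one_div, div_le_div_iff₀ (by positivity) (by positivity)]
  have := abs_le.1 h
  nlinarith [sq_nonneg (s - s'), sq_nonneg (s + s' ), sq_nonneg (2 * s' - s)]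

lemma Qf_nonneg {d : ℕ} (x : Fin d → ℝ) : 0 ≤ Qf x :=
  Finset.sum_nonneg fun _ _ => (qf_pos _).le

lemma Qf_shift {d : ℕ} (x x' : Fin d → ℝ) (h : ‖x - x'‖ ≤ 1) : Qf x' ≤ 3 * Qf x := by
  unfold Qf
  rw [Finset.mul_sum]
  refine Finset.sum_le_sum fun j _ => qf_shift _ _ ?_
  exact (norm_le_pi_norm (x - x') j).trans h

lemma qf_int (a : ℝ) : Integrable fun t : ℝ => qf (a - t) := by
  have := integrable_inv_one_add_sq.comp_sub_left a
  exact this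

lemma Qf_int {d : ℕ} (w : Fin d → ℝ) : Integrable fun t : ℝ => Qf (w - fun _ => t) := by
  unfold Qf
  exact integrable_finsetSum _ fun j _ => qf_int (w j)

lemma Qf_int_le {d : ℕ} (w : Fin d → ℝ) :
    ∫ t in Set.Iic (0 : ℝ), Qf (w - fun _ => t) ≤ d * ∫ t, qf t := by
  refine (setIntegral_le_integral (Qf_int w) (Filter.Eventually.of_forall fun t => Qf_nonneg _)).trans ?_
  unfold Qf
  simp only [Pi.sub_apply]
  rw [integral_finsetSum _ fun j _ => qf_int (w j)]
  refine le_of_eq ?_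
  have : ∀ j : Fin d, ∫ t, qf (w j - t) = ∫ t, qf t := fun j =>
    integral_sub_left_eq_self qf volume (w j)
  simp [this]

lemma int_bd {d : ℕ} {F : Type} [NormedAddCommGroup F] [NormedSpace ℝ F]
    (G : (Fin d → ℝ) → F) (hG : Continuous G) (C : ℝ) (hC : ∀ x, ‖G x‖ ≤ C * Qf x)
    (w : Fin d → ℝ) : IntegrableOn (fun t : ℝ => G (w - fun _ => t)) (Set.Iic 0) := by
  refine Integrable.mono' (((Qf_int w).const_mul C).integrableOn)
    (Continuous.aestronglyMeasurable (by fun_prop)) (Filter.Eventually.of_forall fun t => hC _)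

lemma step {d : ℕ} {F : Type} [NormedAddCommGroup F] [NormedSpace ℝ F] [CompleteSpace F]
    (G : (Fin d → ℝ) → F) (hG : ContDiff ℝ ∞ G)
    (hint : ∀ w, IntegrableOn (fun t : ℝ => G (w - fun _ => t)) (Set.Iic 0))
    (C : ℝ) (hC : ∀ x, ‖fderiv ℝ G x‖ ≤ C * Qf x) (w : Fin d → ℝ) :
    HasFDerivAt (fun w => ∫ t in Set.Iic (0 : ℝ), G (w - fun _ => t))
      (∫ t in Set.Iic (0 : ℝ), fderiv ℝ G (w - fun _ => t)) w := by
  have hc : Continuous (fderiv ℝ G) := hG.continuous_fderiv (by simp)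
  have hd : Differentiable ℝ G := hG.differentiable (by simp)
  have hC' : ∀ x, ‖fderiv ℝ G x‖ ≤ |C| * Qf x := fun x =>
    (hC x).trans (mul_le_mul_of_nonneg_right (le_abs_self C) (Qf_nonneg x))
  refine hasFDerivAt_integral_of_dominated_of_fderiv_le
    (F' := fun w t => fderiv ℝ G (w - fun _ => t)) (s := Metric.ball w 1)
    (bound := fun t => |C| * (3 * Qf (w - fun _ => t)))
    (Metric.ball_mem_nhds w one_pos) ?_ (hint w) ?_ ?_ ?_ ?_
  · exact Filter.Eventually.of_forall fun x => (hint x).aestronglyMeasurable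
  · exact Continuous.aestronglyMeasurable (by fun_prop)
  · refine Filter.Eventually.of_forall fun t x hx => (hC' _).trans ?_
    refine mul_le_mul_of_nonneg_left (Qf_shift _ _ ?_) (abs_nonneg C)
    rw [sub_sub_sub_cancel_right, ← dist_eq_norm, dist_comm]
    exact (Metric.mem_ball.1 hx).le
  · exact (((Qf_int w).const_mul 3).const_mul |C|).integrableOn
  · refine Filter.Eventually.of_forall fun t x _ => ?_
    have h1 : HasFDerivAt (fun y : Fin d → ℝ => y - fun _ => t)
      (ContinuousLinearMap.id ℝ (Fin d → ℝ)) x := (hasFDerivAt_id x).sub_const _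
    have h2 := (hd (x - fun _ => t)).hasFDerivAt.comp x h1
    rw [ContinuousLinearMap.comp_id] at h2
    exact h2

lemma allBd {d : ℕ} (n : ℕ) : ∀ {F : Type} [NormedAddCommGroup F] [NormedSpace ℝ F]
    [CompleteSpace F] (G : (Fin d → ℝ) → F) (_ : ContDiff ℝ ∞ G)
    (_ : ∀ k : ℕ, ∃ C : ℝ, ∀ x, ‖iteratedFDeriv ℝ k G x‖ ≤ C * Qf x),
    ContDiff ℝ n (fun w => ∫ t in Set.Iic (0 : ℝ), G (w - fun _ => t)) ∧
    ∃ C : ℝ, ∀ w, ‖iteratedFDeriv ℝ n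
      (fun w => ∫ t in Set.Iic (0 : ℝ), G (w - fun _ => t)) w‖ ≤ C := by
  induction n with
  | zero =>
    intro F _ _ _ G hG hb
    obtain ⟨C, hC⟩ := hb 0
    obtain ⟨C1, hC1⟩ := hb 1
    simp only [norm_iteratedFDeriv_zero] at hC
    simp only [norm_iteratedFDeriv_one] at hC1
    have hs := step G hG (int_bd G hG.continuous C hC) C1 hC1
    refine ⟨?_, |C| * (d * ∫ t, qf t), fun w => ?_⟩
    · simp only [Nat.cast_zero, contDiff_zero]
      exact continuous_iff_continuousAt.2 fun w => (hs w).continuousAt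
    · rw [norm_iteratedFDeriv_zero]
      refine (norm_integral_le_integral_norm _).trans ?_
      refine (integral_mono_ae (int_bd G hG.continuous C hC w).norm
        (((Qf_int w).const_mul |C|).integrableOn) (Filter.Eventually.of_forall fun t =>
          (hC _).trans (mul_le_mul_of_nonneg_right (le_abs_self C) (Qf_nonneg _)))).trans ?_
      rw [integral_const_mul]
      exact mul_le_mul_of_nonneg_left (Qf_int_le w) (abs_nonneg C)
  | succ n ih =>
    intro F _ _ _ G hG hb
    obtain ⟨C, hC⟩ := hb 0
    obtain ⟨C1, hC1⟩ := hb 1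
    simp only [norm_iteratedFDeriv_zero] at hC
    simp only [norm_iteratedFDeriv_one] at hC1
    have hs := step G hG (int_bd G hG.continuous C hC) C1 hC1
    have := ih (fderiv ℝ G) (hG.fderiv_right (by simp)) (fun k => by
      simpa only [norm_iteratedFDeriv_fderiv] using hb (k + 1))
    have hf : fderiv ℝ (fun w => ∫ t in Set.Iic (0 : ℝ), G (w - fun _ => t)) =
      fun w => ∫ t in Set.Iic (0 : ℝ), fderiv ℝ G (w - fun _ => t) :=
      funext fun w => (hs w).fderiv
    refine ⟨?_, ?_⟩
    · rw [Nat.cast_add, Nat.cast_one, contDiff_succ_iff_fderiv]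
      refine ⟨fun w => (hs w).differentiableAt, by simp, ?_⟩
      rw [hf]; exact this.1
    · simp only [← norm_iteratedFDeriv_fderiv]
      rw [hf]; exact this.2

lemma succBd {d : ℕ} (n : ℕ) {F : Type} [NormedAddCommGroup F] [NormedSpace ℝ F]
    [CompleteSpace F] (G : (Fin d → ℝ) → F) (hG : ContDiff ℝ ∞ G)
    (hint : ∀ w, IntegrableOn (fun t : ℝ => G (w - fun _ => t)) (Set.Iic 0))
    (hb : ∀ k : ℕ, ∃ C : ℝ, ∀ x, ‖iteratedFDeriv ℝ (k + 1) G x‖ ≤ C * Qf x) :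
    ContDiff ℝ (n + 1 : ℕ) (fun w => ∫ t in Set.Iic (0 : ℝ), G (w - fun _ => t)) ∧
    ∃ C : ℝ, ∀ w, ‖iteratedFDeriv ℝ (n + 1)
      (fun w => ∫ t in Set.Iic (0 : ℝ), G (w - fun _ => t)) w‖ ≤ C := by
  obtain ⟨C1, hC1⟩ := hb 0
  rw [zero_add] at hC1
  simp only [norm_iteratedFDeriv_one] at hC1
  have hs := step G hG hint C1 hC1
  have := allBd n (fderiv ℝ G) (hG.fderiv_right (by simp)) (fun k => by
    simpa only [norm_iteratedFDeriv_fderiv] using hb k)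
  have hf : fderiv ℝ (fun w => ∫ t in Set.Iic (0 : ℝ), G (w - fun _ => t)) =
    fun w => ∫ t in Set.Iic (0 : ℝ), fderiv ℝ G (w - fun _ => t) :=
    funext fun w => (hs w).fderiv
  refine ⟨?_, ?_⟩
  · rw [Nat.cast_add, Nat.cast_one, contDiff_succ_iff_fderiv]
    refine ⟨fun w => (hs w).differentiableAt, by simp, ?_⟩
    rw [hf]; exact this.1
  · simp only [← norm_iteratedFDeriv_fderiv]
    rw [hf]; exact this.2

lemma phi1_eq : phi1 = gaussianPDFReal 0 1 := by
  ext t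
  simp [phi1, gaussianPDFReal, div_eq_inv_mul]

lemma phi1_integrable : Integrable phi1 := by
  rw [phi1_eq]; exact integrable_gaussianPDFReal 0 1

lemma phi1_nonneg (t : ℝ) : 0 ≤ phi1 t := by unfold phi1; positivity

lemma phi1_contDiff : ContDiff ℝ ∞ phi1 := by
  unfold phi1
  fun_prop

lemma Phi1_hasDeriv (t : ℝ) : HasDerivAt Phi1 (phi1 t) t := by
  have h : Phi1 = fun s => Phi1 0 + ∫ u in (0 : ℝ)..s, phi1 u := by
    ext s
    rw [← intervalIntegral.integral_Iic_sub_Iic phi1_integrable.integrableOn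
      phi1_integrable.integrableOn]
    simp [Phi1]
  rw [h]
  refine (intervalIntegral.integral_hasDerivAt_right phi1_integrable.intervalIntegrable ?_ ?_).const_add _
  · exact phi1_contDiff.continuous.stronglyMeasurableAtFilter _ _
  · exact phi1_contDiff.continuous.continuousAt

lemma Phi1_deriv : deriv Phi1 = phi1 := funext fun t => (Phi1_hasDeriv t).deriv

lemma Phi1_contDiff : ContDiff ℝ ∞ Phi1 := by
  rw [contDiff_infty_iff_deriv, Phi1_deriv]
  exact ⟨fun t => (Phi1_hasDeriv t).differentiableAt, phi1_contDiff⟩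

lemma Phi1_nonneg (t : ℝ) : 0 ≤ Phi1 t :=
  integral_nonneg fun u => phi1_nonneg u

lemma Phi1_le_one (t : ℝ) : Phi1 t ≤ 1 := by
  refine (setIntegral_le_integral phi1_integrable (Filter.Eventually.of_forall phi1_nonneg)).trans ?_
  rw [phi1_eq, integral_gaussianPDFReal_eq_one 0 one_ne_zero]

lemma Phi1_le_exp : ∃ C : ℝ, ∀ t, Phi1 t ≤ C * Real.exp t := by
  refine ⟨Real.exp (1/2) / Real.sqrt (2 * Real.pi), fun t => ?_⟩
  rw [← integral_exp_Iic t, ← integral_const_mul]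
  refine integral_mono_ae phi1_integrable.integrableOn ((integrableOn_exp_Iic t).const_mul _)
    (Filter.Eventually.of_forall fun u => ?_)
  simp only [phi1]
  rw [div_mul_eq_mul_div, ← Real.exp_add]
  gcongr
  nlinarith [sq_nonneg (u + 1)]

lemma poly_gauss (p : Polynomial ℝ) : ∃ C : ℝ, ∀ x : ℝ, |p.eval x * Real.exp (-(x ^ 2 / 2))| ≤ C := by
  induction p using Polynomial.induction_on' with
  | add p q hp hq =>
    obtain ⟨C, hC⟩ := hp
    obtain ⟨D, hD⟩ := hq
    refine ⟨C + D, fun x => ?_⟩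
    rw [Polynomial.eval_add, add_mul]
    exact (abs_add_le _ _).trans (add_le_add (hC x) (hD x))
  | monomial n a =>
    refine ⟨|a| * (n.factorial * Real.exp (1/2)), fun x => ?_⟩
    rw [Polynomial.eval_monomial, mul_assoc, abs_mul]
    refine mul_le_mul_of_nonneg_left ?_ (abs_nonneg a)
    rw [abs_mul, abs_pow, abs_of_pos (Real.exp_pos _)]
    have h1 := Real.pow_div_factorial_le_exp |x| (abs_nonneg x) n
    rw [div_le_iff₀ (by positivity)] at h1
    have h2 : Real.exp |x| * Real.exp (-(x ^ 2 / 2)) ≤ Real.exp (1/2) := by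
      rw [← Real.exp_add]
      gcongr
      nlinarith [sq_nonneg (|x| - 1), sq_abs x]
    calc |x| ^ n * Real.exp (-(x ^ 2 / 2)) ≤ (Real.exp |x| * n.factorial) * Real.exp (-(x ^ 2 / 2)) := by
          gcongr
      _ = n.factorial * (Real.exp |x| * Real.exp (-(x ^ 2 / 2))) := by ring
      _ ≤ _ := by gcongr

lemma phi1_iter (n : ℕ) : ∃ C : ℝ, ∀ x, |iteratedDeriv n phi1 x| ≤ C * qf x := by
  obtain ⟨C, hC⟩ := poly_gauss ((1 + Polynomial.X ^ 2) * (Polynomial.hermite n).map (algebraMap ℤ ℝ))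
  refine ⟨C / Real.sqrt (2 * Real.pi), fun x => ?_⟩
  have h : phi1 = fun t => (Real.sqrt (2 * Real.pi))⁻¹ * Real.exp (-(t ^ 2 / 2)) := by
    ext t; simp [phi1, div_eq_inv_mul]
  have hg : ContDiff ℝ n (fun t : ℝ => Real.exp (-(t ^ 2 / 2))) := by fun_prop
  rw [h, iteratedDeriv_const_mul_field, iteratedDeriv_eq_iterate,
    Polynomial.deriv_gaussian_eq_hermite_mul_gaussian]
  have := hC x
  rw [Polynomial.eval_mul, Polynomial.eval_map_algebraMap] at this
  simp only [Polynomial.eval_add, Polynomial.eval_one, Polynomial.eval_pow, Polynomial.eval_X] at this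
  rw [abs_mul, abs_mul, abs_of_pos (show 0 < 1 + x ^ 2 by positivity)] at this
  rw [abs_mul, abs_mul, abs_mul, abs_pow, abs_neg, abs_one, one_pow, one_mul, abs_of_nonneg (by positivity : 0 ≤ (Real.sqrt (2 * Real.pi))⁻¹)]
  rw [div_eq_inv_mul C, mul_assoc _ C]
  refine mul_le_mul_of_nonneg_left ?_ (by positivity)
  unfold qf
  rw [← div_eq_mul_inv, le_div_iff₀ (by positivity)]
  linarith

lemma Phi1_iter (n : ℕ) : ∃ C : ℝ, 0 ≤ C ∧ ∀ x, ‖iteratedFDeriv ℝ n Phi1 x‖ ≤ C ∧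
    (n ≠ 0 → ‖iteratedFDeriv ℝ n Phi1 x‖ ≤ C * qf x) := by
  simp only [norm_iteratedFDeriv_eq_norm_iteratedDeriv]
  cases n with
  | zero =>
    refine ⟨1, zero_le_one, fun x => ⟨?_, by simp⟩⟩
    simp only [iteratedDeriv_zero, Real.norm_eq_abs, abs_of_nonneg (Phi1_nonneg x)]
    exact Phi1_le_one x
  | succ n =>
    obtain ⟨C, hC⟩ := phi1_iter n
    have hle : ∀ x, qf x ≤ 1 := fun x => by
      unfold qf; exact inv_le_one_of_one_le₀ (by nlinarith [sq_nonneg x])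
    have hC0 : 0 ≤ C := by
      have := (abs_nonneg _).trans (hC 0)
      exact nonneg_of_mul_nonneg_left this (qf_pos 0)
    refine ⟨C, hC0, fun x => ?_⟩
    rw [iteratedDeriv_succ', Phi1_deriv, Real.norm_eq_abs]
    exact ⟨(hC x).trans (mul_le_of_le_one_right hC0 (hle x)), fun _ => hC x⟩

noncomputable def Hf {d : ℕ} (x : Fin d → ℝ) : ℝ := ∏ j, Phi1 (-x j)

lemma negproj_norm {d : ℕ} (j : Fin d) :
    ‖-(ContinuousLinearMap.proj (R := ℝ) (φ := fun _ : Fin d => ℝ) j)‖ ≤ 1 := by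
  refine ContinuousLinearMap.opNorm_le_bound _ zero_le_one fun x => ?_
  simpa using norm_le_pi_norm x j

lemma factor_iter {d : ℕ} (n : ℕ) : ∃ C : ℝ, 0 ≤ C ∧ ∀ (j : Fin d) (x : Fin d → ℝ),
    ‖iteratedFDeriv ℝ n (fun x : Fin d → ℝ => Phi1 (-x j)) x‖ ≤ C ∧
    (n ≠ 0 → ‖iteratedFDeriv ℝ n (fun x : Fin d → ℝ => Phi1 (-x j)) x‖ ≤ C * qf (x j)) := by
  obtain ⟨C, hC0, hC⟩ := Phi1_iter n
  refine ⟨C, hC0, fun j x => ?_⟩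
  have key : ‖iteratedFDeriv ℝ n (fun x : Fin d → ℝ => Phi1 (-x j)) x‖ ≤
      ‖iteratedFDeriv ℝ n Phi1 (-x j)‖ := by
    have h := ContinuousLinearMap.iteratedFDeriv_comp_right
      (-(ContinuousLinearMap.proj (R := ℝ) (φ := fun _ : Fin d => ℝ) j)) Phi1_contDiff x
      (i := n) (by exact_mod_cast le_top)
    have h' : (Phi1 ∘ ⇑(-(ContinuousLinearMap.proj (R := ℝ) (φ := fun _ : Fin d => ℝ) j))) =
      fun x : Fin d → ℝ => Phi1 (-x j) := by ext y; simp
    rw [h'] at h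
    rw [h]
    refine (ContinuousMultilinearMap.norm_compContinuousLinearMap_le _ _).trans ?_
    refine mul_le_of_le_one_right (norm_nonneg _) ?_
    exact Finset.prod_le_one (fun _ _ => norm_nonneg _) fun _ _ => negproj_norm j
  have hq : qf (-x j) = qf (x j) := by simp [qf]
  have := hC (-x j)
  rw [hq] at this
  exact ⟨key.trans this.1, fun h => key.trans (this.2 h)⟩

lemma Hf_contDiff {d : ℕ} : ContDiff ℝ ∞ (Hf (d := d)) := by
  unfold Hf
  refine contDiff_prod fun j _ => Phi1_contDiff.comp ?_
  fun_prop

lemma Hf_iter {d : ℕ} (k : ℕ) : ∃ C : ℝ, ∀ x : Fin d → ℝ,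
    ‖iteratedFDeriv ℝ (k + 1) Hf x‖ ≤ C * Qf x := by
  choose C hC0 hC using fun n => factor_iter (d := d) n
  refine ⟨∑ p ∈ (Finset.univ : Finset (Fin d)).sym (k + 1),
    ((p : Multiset (Fin d)).countPerms : ℝ) *
      ∏ j, C ((p : Multiset (Fin d)).count j), fun x => ?_⟩
  have h := norm_iteratedFDeriv_prod_le (𝕜 := ℝ) (u := (Finset.univ : Finset (Fin d)))
    (f := fun j (x : Fin d → ℝ) => Phi1 (-x j)) (N := ∞) (x := x) (n := k + 1)
    (fun j _ => Phi1_contDiff.comp (by fun_prop)) (by exact_mod_cast le_top)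
  refine h.trans ?_
  rw [Finset.sum_mul]
  refine Finset.sum_le_sum fun p _ => ?_
  rw [mul_assoc]
  refine mul_le_mul_of_nonneg_left ?_ (by positivity)
  obtain ⟨j, hj⟩ : ∃ j, j ∈ (p : Multiset (Fin d)) := by
    refine Multiset.exists_mem_of_ne_zero fun h0 => ?_
    have h1 : (p : Multiset (Fin d)).card = k + 1 := p.2
    rw [h0] at h1
    simp at h1
  have hj' : (p : Multiset (Fin d)).count j ≠ 0 := Multiset.count_ne_zero.2 hj
  rw [← Finset.mul_prod_erase _ _ (Finset.mem_univ j), ← Finset.mul_prod_erase _ _ (Finset.mem_univ j)]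
  have h1 := (hC _ j x).2 hj'
  have h2 : qf (x j) ≤ Qf x :=
    Finset.single_le_sum (f := fun j => qf (x j)) (fun i _ => (qf_pos _).le) (Finset.mem_univ j)
  have h3 : ∏ i ∈ Finset.univ.erase j, ‖iteratedFDeriv ℝ ((p : Multiset (Fin d)).count i)
      (fun x : Fin d → ℝ => Phi1 (-x i)) x‖ ≤
      ∏ i ∈ Finset.univ.erase j, C ((p : Multiset (Fin d)).count i) :=
    Finset.prod_le_prod (fun _ _ => norm_nonneg _) fun i _ => (hC _ i x).1
  calc _ ≤ (C ((p : Multiset (Fin d)).count j) * Qf x) *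
        ∏ i ∈ Finset.univ.erase j, C ((p : Multiset (Fin d)).count i) := by
        refine mul_le_mul (h1.trans (mul_le_mul_of_nonneg_left h2 (hC0 _))) h3
          (Finset.prod_nonneg fun _ _ => norm_nonneg _) (mul_nonneg (hC0 _) (Qf_nonneg x))
    _ = _ := by ring

lemma Hf_nonneg {d : ℕ} (x : Fin d → ℝ) : 0 ≤ Hf x :=
  Finset.prod_nonneg fun _ _ => Phi1_nonneg _

lemma Hf_le {d : ℕ} (x : Fin d → ℝ) (j : Fin d) : Hf x ≤ Phi1 (-x j) := by
  unfold Hf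
  rw [← Finset.mul_prod_erase _ _ (Finset.mem_univ j)]
  exact mul_le_of_le_one_right (Phi1_nonneg _)
    (Finset.prod_le_one (fun _ _ => Phi1_nonneg _) fun _ _ => Phi1_le_one _)

lemma Hf_int {d : ℕ} (hd : 0 < d) (w : Fin d → ℝ) (a : ℝ) :
    IntegrableOn (fun t : ℝ => Hf (w - fun _ => t)) (Set.Iic a) := by
  obtain ⟨C, hC⟩ := Phi1_le_exp
  have hb : IntegrableOn (fun t => (C * Real.exp (-w ⟨0, hd⟩)) * Real.exp t) (Set.Iic a) :=
    (integrableOn_exp_Iic a).const_mul _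
  refine Integrable.mono' hb
    (Continuous.aestronglyMeasurable ?_) (Filter.Eventually.of_forall fun t => ?_)
  · exact Hf_contDiff.continuous.comp (by fun_prop)
  · rw [Real.norm_eq_abs, abs_of_nonneg (Hf_nonneg _)]
    refine (Hf_le _ ⟨0, hd⟩).trans ((hC _).trans (le_of_eq ?_))
    rw [mul_assoc, ← Real.exp_add]
    congr 2
    simp [sub_eq_add_neg, add_comm]

lemma Psi_eq (d : ℕ) : Psi d = fun w => ∫ t in Set.Iic (0 : ℝ), Hf (w - fun _ => t) := by
  ext w
  simp [Psi, Hf]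

lemma Psi_smooth (d : ℕ) (hd : 0 < d) (v : ℕ) (hv : 1 ≤ v) : ContDiff ℝ v (Psi d) ∧
    ∃ C : ℝ, ∀ w, ‖iteratedFDeriv ℝ v (Psi d) w‖ ≤ C := by
  obtain ⟨n, rfl⟩ := Nat.exists_eq_add_of_le' hv
  rw [Psi_eq]
  exact succBd n Hf Hf_contDiff (fun w => Hf_int hd w 0) Hf_iter

lemma gamma_eq (d : ℕ) (γ : Measure (Fin d → ℝ)) [IsProbabilityMeasure γ]
    (hgauss : ∀ l : (Fin d → ℝ) →ₗ[ℝ] ℝ, ∃ vr : NNReal, γ.map l = gaussianReal 0 vr)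
    (hcov : ∀ j k, ∫ z, z j * z k ∂γ = if j = k then (1 : ℝ) else 0) :
    γ = Measure.pi (fun _ : Fin d => gaussianReal 0 1) := by
  have hG : IsGaussian γ := isGaussian_of_map_eq_gaussianReal fun L => by
    obtain ⟨vr, h⟩ := hgauss L.toLinearMap
    exact ⟨0, vr, h⟩
  have hmap : ∀ j : Fin d, γ.map (fun z => z j) = gaussianReal 0 1 := by
    intro j
    obtain ⟨vr, h⟩ := hgauss (LinearMap.proj j)
    have h' : γ.map (fun z => z j) = gaussianReal 0 vr := h
    rw [h']
    have h1 : ∫ x, x ^ 2 ∂(gaussianReal 0 vr) = 1 := by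
      rw [← h', integral_map (measurable_pi_apply j).aemeasurable (by fun_prop)]
      simpa [sq] using hcov j j
    have h2 : Var[id; gaussianReal 0 vr] = vr := variance_id_gaussianReal
    rw [variance_of_integral_eq_zero (by fun_prop) (by simp)] at h2
    have h3 : (vr : ℝ) = 1 := by rw [← h2]; simpa using h1
    congr 1
    exact_mod_cast h3
  have hmean : ∀ j : Fin d, ∫ z, z j ∂γ = 0 := by
    intro j
    have : ∫ x, x ∂(γ.map (fun z => z j)) = 0 := by rw [hmap]; simp
    rwa [integral_map (measurable_pi_apply j).aemeasurable (by fun_prop)] at this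
  have hL2 : ∀ j : Fin d, MemLp (fun z : Fin d → ℝ => z j) 2 γ := fun j =>
    IsGaussian.memLp_dual γ (ContinuousLinearMap.proj (R := ℝ) (φ := fun _ : Fin d => ℝ) j) 2
      (by simp)
  have hlaw : HasGaussianLaw (fun z : Fin d → ℝ => fun j => z j) γ := ⟨by simpa using hG⟩
  have hind : iIndepFun (fun (j : Fin d) (z : Fin d → ℝ) => z j) γ := by
    refine hlaw.iIndepFun_of_covariance_eq_zero fun i j hij => ?_
    rw [covariance_eq_sub (hL2 i) (hL2 j)]
    simp only [hmean, Pi.mul_apply, hcov, hij]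
    simp
  have := (iIndepFun_iff_map_fun_eq_pi_map (fun j => (measurable_pi_apply j).aemeasurable)).1 hind
  simp only [hmap] at this
  rw [← this]
  simp

lemma gauss_Iic (s : ℝ) : (gaussianReal 0 1).real (Set.Iic s) = Phi1 s := by
  rw [Measure.real, gaussianReal_apply_eq_integral 0 one_ne_zero, ← phi1_eq]
  exact ENNReal.toReal_ofReal (Phi1_nonneg s)

lemma orth_prob (d : ℕ) (w : Fin d → ℝ) (s : ℝ) :
    (Measure.pi (fun _ : Fin d => gaussianReal 0 1)).real {z | ∀ j, w j + z j ≤ s}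
      = Hf (w - fun _ => s) := by
  have : {z : Fin d → ℝ | ∀ j, w j + z j ≤ s} = Set.univ.pi fun j => Set.Iic (s - w j) := by
    ext z
    simp only [Set.mem_ofPred_eq, Set.mem_pi, Set.mem_univ, Set.mem_Iic, true_imp_iff]
    exact forall_congr' fun j => by rw [le_sub_iff_add_le, add_comm]
  rw [this, Measure.real, Measure.pi_pi, ENNReal.toReal_prod, Hf]
  refine Finset.prod_congr rfl fun j _ => ?_
  rw [← gauss_Iic]
  simp [Measure.real]

lemma gphi_eq (φ : ℝ) (hφ : 0 < φ) (M : ℝ) :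
    gphi φ M = φ * ∫ s in Set.Ioc 0 (1 / φ), (if M ≤ s then (1 : ℝ) else 0) := by
  have h0 : (fun s : ℝ => if M ≤ s then (1 : ℝ) else 0) = (Set.Ici M).indicator 1 := by
    ext s; simp [Set.indicator]
  have hp : 0 < 1 / φ := by positivity
  rw [h0, integral_indicator_one measurableSet_Ici, measureReal_restrict_apply measurableSet_Ici]
  unfold gphi
  split_ifs with h1 h2
  · have : Set.Ici M ∩ Set.Ioc 0 (1 / φ) = Set.Ioc 0 (1 / φ) :=
      Set.inter_eq_right.2 fun s hs => h1.trans hs.1.le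
    rw [this, Real.volume_real_Ioc_of_le hp.le]
    field_simp
    simp
  · have : Set.Ici M ∩ Set.Ioc 0 (1 / φ) = Set.Icc M (1 / φ) := by
      ext s
      simp only [Set.mem_inter_iff, Set.mem_Ici, Set.mem_Ioc, Set.mem_Icc]
      exact ⟨fun h => ⟨h.1, h.2.2⟩, fun h => ⟨h.1, by linarith [h.1], h.2⟩⟩
    rw [this, Real.volume_real_Icc_of_le h2.le]
    field_simp
  · have : Set.Ici M ∩ Set.Ioc 0 (1 / φ) ⊆ {1 / φ} := by
      rintro s ⟨h3, h4⟩
      have h5 : M ≤ s := h3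
      exact le_antisymm h4.2 (by linarith)
    have h : volume.real (Set.Ici M ∩ Set.Ioc 0 (1 / φ)) = 0 := by
      rw [Measure.real, measure_mono_null this (by simp)]; simp
    rw [h, mul_zero]

lemma rho_eq (d : ℕ) (hd : 0 < d) (φ : ℝ) (hφ : 0 < φ) (w : Fin d → ℝ) :
    rhoTil d φ (Measure.pi (fun _ : Fin d => gaussianReal 0 1)) w =
      φ * ∫ s in Set.Ioc 0 (1 / φ), Hf (w - fun _ => s) := by
  have : Nonempty (Fin d) := ⟨⟨0, hd⟩⟩
  unfold rhoTil morth
  simp only [gphi_eq φ hφ]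
  rw [integral_const_mul]
  congr 1
  have hset : MeasurableSet {p : (Fin d → ℝ) × ℝ | ∀ j, w j + p.1 j ≤ p.2} := by
    rw [Set.ofPred_forall]
    exact MeasurableSet.iInter fun j => measurableSet_le (by fun_prop) (by fun_prop)
  have hsup : ∀ (z : Fin d → ℝ) (s : ℝ), (⨆ j, (w + z) j) ≤ s ↔ ∀ j, w j + z j ≤ s := by
    intro z s
    rw [ciSup_le_iff (Set.finite_range _).bddAbove]
    rfl
  simp only [hsup]
  rw [integral_integral_swap]
  · refine integral_congr_ae (Filter.Eventually.of_forall fun s => ?_)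
    simp only
    rw [← orth_prob d w s, ← integral_indicator_one]
    · congr 1
      ext z
      simp [Set.indicator]
    · exact hset.preimage (f := fun z : Fin d → ℝ => (z, s)) (by fun_prop)
  · refine Integrable.mono' (integrable_const (1 : ℝ)) ?_ ?_
    · have : Function.uncurry (fun (z : Fin d → ℝ) (s : ℝ) =>
        if ∀ j, w j + z j ≤ s then (1 : ℝ) else 0) =
        {p : (Fin d → ℝ) × ℝ | ∀ j, w j + p.1 j ≤ p.2}.indicator 1 := by
        ext p; simp [Set.indicator, Function.uncurry]
      rw [this]
      exact (measurable_one.indicator hset).aestronglyMeasurable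
    · refine Filter.Eventually.of_forall fun p => ?_
      simp only [Function.uncurry]
      split_ifs <;> simp

lemma rho_eq_Psi (d : ℕ) (hd : 0 < d) (φ : ℝ) (hφ : 0 < φ) :
    rhoTil d φ (Measure.pi (fun _ : Fin d => gaussianReal 0 1)) =
      fun w => φ • (Psi d (w - fun _ => 1 / φ) - Psi d w) := by
  ext w
  have hp : 0 < 1 / φ := by positivity
  rw [rho_eq d hd φ hφ, smul_eq_mul, Psi_eq]
  congr 1
  have h1 : ∫ t in Set.Iic (0 : ℝ), Hf ((w - fun _ => 1 / φ) - fun _ => t) =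
      ∫ t in Set.Iic (1 / φ), Hf (w - fun _ => t) := by
    have hm := (measurePreserving_add_right (volume : Measure ℝ) (1 / φ)).setIntegral_preimage_emb
      (measurableEmbedding_addRight (1 / φ)) (fun t => Hf (w - fun _ => t)) (Set.Iic (1 / φ))
    rw [← hm]
    have : (fun x : ℝ => x + 1 / φ) ⁻¹' Set.Iic (1 / φ) = Set.Iic 0 := by
      ext x; simp
    rw [this]
    refine integral_congr_ae (Filter.Eventually.of_forall fun t => ?_)
    simp only
    congr 1
    ext j
    simp only [Pi.sub_apply]
    ring
  simp only
  rw [h1, intervalIntegral.integral_Iic_sub_Iic (Hf_int hd w 0) (Hf_int hd w (1 / φ)),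
    intervalIntegral.integral_of_le hp.le]

theorem main_aux (d : ℕ) (hd : 0 < d) (η : ℝ) (hη : 0 ≤ η) (φ : ℝ) (hφ : 0 < φ)
    (v : ℕ) (hv : 1 ≤ v) (w : Fin d → ℝ) :
      ∑ J : Fin v → Fin d,
        (⨆ y : {y : Fin d → ℝ // ‖y‖ ≤ η},
          |iteratedFDeriv ℝ v (rhoTil d φ (Measure.pi (fun _ : Fin d => gaussianReal 0 1)))
            (w + y.1) (fun i => Pi.single (J i) 1)|)
      ≤ 2 * φ *
        (⨆ w' : Fin d → ℝ, ∑ J : Fin v → Fin d,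
          (⨆ y : {y : Fin d → ℝ // ‖y‖ ≤ η},
            |iteratedFDeriv ℝ v (Psi d) (w' + y.1) (fun i => Pi.single (J i) 1)|)) := by
  obtain ⟨hsm, C, hC⟩ := Psi_smooth d hd v hv
  have : Nonempty {y : Fin d → ℝ // ‖y‖ ≤ η} := ⟨⟨0, by simpa using hη⟩⟩
  have hb : ∀ (J : Fin v → Fin d) (x : Fin d → ℝ),
      |iteratedFDeriv ℝ v (Psi d) x (fun i => Pi.single (J i) 1)| ≤ C := by
    intro J x
    have h := (iteratedFDeriv ℝ v (Psi d) x).le_opNorm (fun i => Pi.single (J i) 1)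
    have h1 : ∏ i, ‖(Pi.single (J i) 1 : Fin d → ℝ)‖ = 1 := by
      refine Finset.prod_eq_one fun i _ => ?_
      rw [Pi.norm_single, norm_one]
    rw [h1, mul_one] at h
    exact h.trans (hC x)
  have hbd : ∀ (J : Fin v → Fin d) (x : Fin d → ℝ), BddAbove (Set.range
      fun y : {y : Fin d → ℝ // ‖y‖ ≤ η} =>
        |iteratedFDeriv ℝ v (Psi d) (x + y.1) (fun i => Pi.single (J i) 1)|) := by
    rintro J x
    exact ⟨C, by rintro _ ⟨y, rfl⟩; exact hb J _⟩
  set S : (Fin d → ℝ) → ℝ := fun w' => ∑ J : Fin v → Fin d,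
          (⨆ y : {y : Fin d → ℝ // ‖y‖ ≤ η},
            |iteratedFDeriv ℝ v (Psi d) (w' + y.1) (fun i => Pi.single (J i) 1)|) with hS
  have hSb : BddAbove (Set.range S) := by
    refine ⟨∑ _J : Fin v → Fin d, C, ?_⟩
    rintro _ ⟨x, rfl⟩
    exact Finset.sum_le_sum fun J _ => ciSup_le fun y => hb J _
  have hder : ∀ x, iteratedFDeriv ℝ v
      (rhoTil d φ (Measure.pi (fun _ : Fin d => gaussianReal 0 1))) x =
      φ • (iteratedFDeriv ℝ v (Psi d) (x - fun _ => 1 / φ) - iteratedFDeriv ℝ v (Psi d) x) := by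
    intro x
    rw [rho_eq_Psi d hd φ hφ]
    have h1 : ContDiff ℝ v (fun w => Psi d (w - fun _ => 1 / φ)) :=
      hsm.comp (contDiff_id.sub contDiff_const)
    rw [iteratedFDeriv_const_smul_apply' (h1.sub hsm).contDiffAt,
      fun_iteratedFDeriv_sub_apply h1.contDiffAt hsm.contDiffAt, iteratedFDeriv_comp_sub]
  have hle : ∑ J : Fin v → Fin d,
        (⨆ y : {y : Fin d → ℝ // ‖y‖ ≤ η},
          |iteratedFDeriv ℝ v (rhoTil d φ (Measure.pi (fun _ : Fin d => gaussianReal 0 1)))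
            (w + y.1) (fun i => Pi.single (J i) 1)|) ≤
      φ * (S (w - fun _ => 1 / φ) + S w) := by
    rw [hS]
    simp only
    rw [← Finset.sum_add_distrib, Finset.mul_sum]
    refine Finset.sum_le_sum fun J _ => ciSup_le fun y => ?_
    rw [hder, smul_apply, sub_apply, smul_eq_mul, abs_mul,
      abs_of_pos hφ]
    refine mul_le_mul_of_nonneg_left ((abs_sub _ _).trans (add_le_add ?_ ?_)) hφ.le
    · have := le_ciSup (hbd J (w - fun _ => 1 / φ)) y
      rwa [sub_add_eq_add_sub] at this
    · exact le_ciSup (hbd J w) y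
  refine hle.trans ?_
  have h1 := le_ciSup hSb (w - fun _ => 1 / φ)
  have h2 := le_ciSup hSb w
  nlinarith

/-- with η = K/√(log d) (d ≥ 3, K > 0), for every v ≥ 1,
sup_w Σ_{j_1…j_v} sup_{‖y‖_∞≤η} |∂_{j_1…j_v} ρ̃(w+y)|
  ≤ 2φ sup_w Σ_{j_1…j_v} sup_{‖y‖_∞≤η} |∂_{j_1…j_v} Ψ(w+y)|. -/
theorem stmt17 (d : ℕ) (hd : 3 ≤ d) (K : ℝ) (hK : 0 < K) (φ : ℝ) (hφ : 0 < φ)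
    (γ : Measure (Fin d → ℝ)) [IsProbabilityMeasure γ]
    (hgauss : ∀ l : (Fin d → ℝ) →ₗ[ℝ] ℝ, ∃ vr : NNReal, γ.map l = gaussianReal 0 vr)
    (hcov : ∀ j k, ∫ z, z j * z k ∂γ = if j = k then (1 : ℝ) else 0)
    (v : ℕ) (hv : 1 ≤ v) :
    ∀ w : Fin d → ℝ,
      ∑ J : Fin v → Fin d,
        (⨆ y : {y : Fin d → ℝ // ‖y‖ ≤ K / Real.sqrt (Real.log d)},
          |iteratedFDeriv ℝ v (rhoTil d φ γ) (w + y.1) (fun i => Pi.single (J i) 1)|)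
      ≤ 2 * φ *
        (⨆ w' : Fin d → ℝ, ∑ J : Fin v → Fin d,
          (⨆ y : {y : Fin d → ℝ // ‖y‖ ≤ K / Real.sqrt (Real.log d)},
            |iteratedFDeriv ℝ v (Psi d) (w' + y.1) (fun i => Pi.single (J i) 1)|)) := by
  have hγ := gamma_eq d γ hgauss hcov
  subst hγ
  exact main_aux d (by omega) _ (by positivity) φ hφ v hv
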